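/- For α > 1, the function t ↦ ν^ζ_α(t) = (1/√(2πt)) Σ_{n≥2} (Λ(n)/n^α)(1 - e^{-(log n)²/(2t)}) is completely monotone on (0,∞). -/

import Mathlib

/-!
Substituting `z = u²` in the Laplace representation of the kernel gives the Gaussian form
`(2πt)^(-1/2) (1 - e^{-x²/(2t)}) = (√2 π)⁻¹ ∫_ℝ e^{-t u²} (1 - cos (√2 x u)) du`,
which is the Fourier transform of a Gaussian. Since `∑ Λ(k) / k^α` converges for `α > 1`, the weights
can be summed under the integral: `ν^ζ_α(t) = ∫ e^{-t u²} w(u) du` with `w` bounded, continuous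
and nonnegative. For `t > 0` the function is therefore the moment generating function of the
nonpositive variable `u ↦ -u²` under the measure `w(u) du`, so its `n`-th derivative is
`∫ (-u²)^n e^{-t u²} w(u) du`, whose sign is `(-1)^n`.
-/

open Real MeasureTheory Set ArithmeticFunction

lemma integrable_exp_mul_cos {t : ℝ} (ht : 0 < t) (c : ℝ) :
    Integrable (fun u : ℝ => exp (t * -u ^ 2) * (1 - cos (c * u))) := by
  have h1 : Integrable (fun u : ℝ => exp (t * -u ^ 2)) := by
    simpa using integrable_exp_neg_mul_sq ht
  refine h1.mul_bdd (c := 2) (by fun_prop) (Filter.Eventually.of_forall fun u => ?_)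
  rw [Real.norm_eq_abs, abs_le]
  constructor <;> linarith [neg_one_le_cos (c * u), cos_le_one (c * u)]

lemma integral_exp_mul_cos {t : ℝ} (ht : 0 < t) (c : ℝ) :
    ∫ u : ℝ, exp (t * -u ^ 2) * cos (c * u) = √(π / t) * exp (-c ^ 2 / (4 * t)) := by
  have h := fourierIntegral_gaussian (b := (t : ℂ)) (by simpa using ht) (c : ℂ)
  have h1 : Integrable (fun u : ℝ =>
      Complex.exp (Complex.I * c * u) * Complex.exp (-(t : ℂ) * (u : ℂ) ^ 2)) := by
    have := integrable_cexp_quadratic (b := (t : ℂ)) (by simpa using ht) (Complex.I * c) 0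
    refine this.congr (Filter.Eventually.of_forall fun u => ?_)
    simp only
    rw [← Complex.exp_add]
    congr 1
    ring
  have h2 := congrArg Complex.re h
  rw [← RCLike.re_eq_complex_re, ← integral_re h1] at h2
  convert h2 using 1
  · refine integral_congr_ae (Filter.Eventually.of_forall fun u => ?_)
    simp only [RCLike.re_eq_complex_re]
    have e1 : Complex.exp (-(t : ℂ) * (u : ℂ) ^ 2) = ((exp (t * -u ^ 2) : ℝ) : ℂ) := by
      push_cast
      congr 1
      ring
    have e2 : Complex.I * c * u = ((c * u : ℝ) : ℂ) * Complex.I := by push_cast; ring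
    rw [e1, e2, Complex.re_mul_ofReal, Complex.exp_ofReal_mul_I_re, mul_comm]
  · have e1 : ((π : ℂ) / t) ^ (1 / 2 : ℂ) = ((√(π / t) : ℝ) : ℂ) := by
      rw [Real.sqrt_eq_rpow, Complex.ofReal_cpow (by positivity)]
      push_cast
      rfl
    have e2 : Complex.exp (-(c : ℂ) ^ 2 / (4 * t)) = ((exp (-c ^ 2 / (4 * t)) : ℝ) : ℂ) := by
      push_cast
      rfl
    rw [RCLike.re_eq_complex_re, e1, e2, ← Complex.ofReal_mul, Complex.ofReal_re]

/-- The frequency `√2 x` is the one for which the Gaussian transform produces `x² / (2t)`. -/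
lemma integral_kernel {t : ℝ} (ht : 0 < t) (x : ℝ) :
    ∫ u : ℝ, exp (t * -u ^ 2) * (1 - cos (√2 * x * u)) =
      √(π / t) * (1 - exp (-x ^ 2 / (2 * t))) := by
  have h0 : Integrable (fun u : ℝ => exp (t * -u ^ 2)) := by
    simpa using integrable_exp_neg_mul_sq ht
  have hI : ∫ u : ℝ, exp (t * -u ^ 2) = √(π / t) := by
    simpa using integral_gaussian t
  have h1 : Integrable (fun u : ℝ => exp (t * -u ^ 2) * cos (√2 * x * u)) :=
    h0.mul_bdd (c := 1) (by fun_prop)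
      (Filter.Eventually.of_forall fun u => abs_cos_le_one _)
  simp_rw [mul_sub, mul_one]
  rw [integral_sub h0 h1, hI, integral_exp_mul_cos ht]
  congr 3
  rw [mul_pow, Real.sq_sqrt zero_le_two]
  field_simp
  ring

/-- The density with respect to Lebesgue measure of the mixing measure, in the variable `u = √z`,
for weights `a k` placed at the points `x k`. -/
noncomputable def mixDensity (a x : ℕ → ℝ) (u : ℝ) : ℝ :=
  (√2 * π)⁻¹ * ∑' k, a k * (1 - cos (√2 * x k * u))

section

variable {a x : ℕ → ℝ}

lemma term_nonneg (ha : ∀ k, 0 ≤ a k) (k : ℕ) (u : ℝ) :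
    0 ≤ a k * (1 - cos (√2 * x k * u)) :=
  mul_nonneg (ha k) (by linarith [cos_le_one (√2 * x k * u)])

lemma norm_term_le (ha : ∀ k, 0 ≤ a k) (k : ℕ) (u : ℝ) :
    ‖a k * (1 - cos (√2 * x k * u))‖ ≤ a k * 2 := by
  rw [Real.norm_of_nonneg (term_nonneg ha k u)]
  exact mul_le_mul_of_nonneg_left (by linarith [neg_one_le_cos (√2 * x k * u)]) (ha k)

lemma mixDensity_nonneg (ha : ∀ k, 0 ≤ a k) (u : ℝ) : 0 ≤ mixDensity a x u :=
  mul_nonneg (by positivity) (tsum_nonneg fun k => term_nonneg ha k u)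

lemma continuous_mixDensity (ha : ∀ k, 0 ≤ a k) (hs : Summable a) :
    Continuous (mixDensity a x) :=
  continuous_const.mul
    (continuous_tsum (fun k => by fun_prop) (hs.mul_right 2) (norm_term_le ha))

lemma mixDensity_le (ha : ∀ k, 0 ≤ a k) (hs : Summable a) (u : ℝ) :
    mixDensity a x u ≤ (√2 * π)⁻¹ * ∑' k, a k * 2 := by
  refine mul_le_mul_of_nonneg_left ?_ (by positivity)
  have h := Summable.of_norm_bounded (hs.mul_right 2) (fun k => norm_term_le (x := x) ha k u)
  exact h.tsum_le_tsum (fun k => (le_abs_self _).trans (norm_term_le ha k u)) (hs.mul_right 2)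

lemma integrable_exp_mul_mixDensity (ha : ∀ k, 0 ≤ a k) (hs : Summable a) {t : ℝ} (ht : 0 < t) :
    Integrable (fun u : ℝ => mixDensity a x u * exp (t * -u ^ 2)) := by
  have h0 : Integrable (fun u : ℝ => exp (t * -u ^ 2)) := by
    simpa using integrable_exp_neg_mul_sq ht
  refine h0.bdd_mul (c := (√2 * π)⁻¹ * ∑' k, a k * 2)
    (continuous_mixDensity ha hs).aestronglyMeasurable (Filter.Eventually.of_forall fun u => ?_)
  rw [Real.norm_of_nonneg (mixDensity_nonneg ha u)]
  exact mixDensity_le ha hs u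

lemma integral_exp_mul_mixDensity (ha : ∀ k, 0 ≤ a k) (hs : Summable a) {t : ℝ} (ht : 0 < t) :
    ∫ u : ℝ, mixDensity a x u * exp (t * -u ^ 2) =
      1 / √(2 * π * t) * ∑' k, a k * (1 - exp (-x k ^ 2 / (2 * t))) := by
  have hint : ∀ k, ∫ u : ℝ, a k * (exp (t * -u ^ 2) * (1 - cos (√2 * x k * u))) =
      √(π / t) * (a k * (1 - exp (-x k ^ 2 / (2 * t)))) := fun k => by
    rw [integral_const_mul, integral_kernel ht]
    ring
  have hnn : ∀ k u, 0 ≤ a k * (exp (t * -u ^ 2) * (1 - cos (√2 * x k * u))) := fun k u =>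
    mul_nonneg (ha k) (mul_nonneg (exp_pos _).le (by linarith [cos_le_one (√2 * x k * u)]))
  have hsum : Summable fun k => a k * (1 - exp (-x k ^ 2 / (2 * t))) := by
    refine Summable.of_nonneg_of_le (fun k => mul_nonneg (ha k) ?_) (fun k => ?_) hs
    · have : exp (-x k ^ 2 / (2 * t)) ≤ 1 := by
        rw [exp_le_one_iff, neg_div]
        have : 0 ≤ x k ^ 2 / (2 * t) := by positivity
        linarith
      linarith
    · exact mul_le_of_le_one_right (ha k) (by linarith [exp_pos (-x k ^ 2 / (2 * t))])
  have hswap := integral_tsum_of_summable_integral_norm (μ := volume)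
    (F := fun k (u : ℝ) => a k * (exp (t * -u ^ 2) * (1 - cos (√2 * x k * u))))
    (fun k => (integrable_exp_mul_cos ht _).const_mul (a k))
    (by
      simp_rw [fun k u => Real.norm_of_nonneg (hnn k u), hint]
      exact hsum.mul_left _)
  simp_rw [hint] at hswap
  have hc : 1 / √(2 * π * t) = (√2 * π)⁻¹ * √(π / t) := by
    rw [Real.sqrt_mul (by positivity), Real.sqrt_mul zero_le_two, Real.sqrt_div pi_pos.le]
    have h1 : √π ≠ 0 := by positivity
    have h2 : √t ≠ 0 := by positivity
    field_simp
    rw [Real.sq_sqrt pi_pos.le]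
  rw [hc, mul_assoc, ← tsum_mul_left, hswap, ← integral_const_mul]
  refine integral_congr_ae (Filter.Eventually.of_forall fun u => ?_)
  simp only [mixDensity]
  rw [mul_assoc, ← tsum_mul_right]
  congr 2
  ext k
  ring

/-- The measure `w(u) du` with `w = mixDensity a x`; truncation at zero has no effect for
nonnegative weights. -/
noncomputable def mixMeasure (a x : ℕ → ℝ) : Measure ℝ :=
  volume.withDensity fun u => ((mixDensity a x u).toNNReal : ENNReal)

lemma mgf_mixMeasure (ha : ∀ k, 0 ≤ a k) (hs : Summable a) {t : ℝ} (ht : 0 < t) :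
    ProbabilityTheory.mgf (fun u : ℝ => -u ^ 2) (mixMeasure a x) t =
      1 / √(2 * π * t) * ∑' k, a k * (1 - exp (-x k ^ 2 / (2 * t))) := by
  rw [ProbabilityTheory.mgf, mixMeasure, integral_withDensity_eq_integral_smul
    (continuous_mixDensity ha hs).measurable.real_toNNReal, ← integral_exp_mul_mixDensity ha hs ht]
  refine integral_congr_ae (Filter.Eventually.of_forall fun u => ?_)
  simp [NNReal.smul_def, Real.coe_toNNReal _ (mixDensity_nonneg ha u)]

lemma Ioi_subset_integrableExpSet (ha : ∀ k, 0 ≤ a k) (hs : Summable a) :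
    Ioi 0 ⊆ ProbabilityTheory.integrableExpSet (fun u : ℝ => -u ^ 2) (mixMeasure a x) := by
  intro t ht
  change Integrable _ _
  rw [mixMeasure, integrable_withDensity_iff_integrable_smul
    (continuous_mixDensity ha hs).measurable.real_toNNReal]
  refine (integrable_exp_mul_mixDensity (x := x) ha hs ht).congr
    (Filter.Eventually.of_forall fun u => ?_)
  simp [NNReal.smul_def, Real.coe_toNNReal _ (mixDensity_nonneg ha u)]

/-- Complete monotonicity for arbitrary summable nonnegative weights `a k` at arbitrary real
points `x k`. -/
lemma mixture_completely_monotone (ha : ∀ k, 0 ≤ a k) (hs : Summable a) (n : ℕ) {t : ℝ}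
    (ht : 0 < t) :
    0 ≤ (-1 : ℝ) ^ n * iteratedDeriv n (fun t => 1 / √(2 * π * t) *
      ∑' k, a k * (1 - exp (-x k ^ 2 / (2 * t)))) t := by
  have hev : (fun t => 1 / √(2 * π * t) * ∑' k, a k * (1 - exp (-x k ^ 2 / (2 * t)))) =ᶠ[nhds t]
      ProbabilityTheory.mgf (fun u : ℝ => -u ^ 2) (mixMeasure a x) := by
    filter_upwards [Ioi_mem_nhds ht] with s hs'
    exact (mgf_mixMeasure ha hs hs').symm
  have hmem : t ∈ interior
      (ProbabilityTheory.integrableExpSet (fun u : ℝ => -u ^ 2) (mixMeasure a x)) :=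
    interior_maximal (Ioi_subset_integrableExpSet ha hs) isOpen_Ioi ht
  rw [hev.iteratedDeriv_eq, ProbabilityTheory.iteratedDeriv_mgf hmem, ← integral_const_mul]
  refine integral_nonneg fun u => ?_
  change 0 ≤ (-1 : ℝ) ^ n * ((-u ^ 2) ^ n * exp (t * -u ^ 2))
  rw [← mul_assoc, ← mul_pow, neg_one_mul, neg_neg]
  positivity

end

lemma summable_vonMangoldt_div_rpow {α : ℝ} (hα : 1 < α) :
    Summable fun k : ℕ => Λ k / (k : ℝ) ^ α := by
  have h : LSeriesSummable (fun k => ((Λ k : ℝ) : ℂ)) (α : ℂ) :=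
    LSeriesSummable_vonMangoldt (by simpa using hα)
  refine h.norm.congr fun k => ?_
  rw [LSeries.norm_term_eq]
  split_ifs with hk
  · simp [hk]
  · simp [abs_of_nonneg vonMangoldt_nonneg]

theorem nu_zeta_completely_monotone (α : ℝ) (hα : 1 < α) :
    ∀ n : ℕ, ∀ t : ℝ, 0 < t →
      0 ≤ (-1 : ℝ) ^ n *
        iteratedDeriv n
          (fun t => (1 / Real.sqrt (2 * π * t)) *
            ∑' k : ℕ, Λ k / (k : ℝ) ^ α * (1 - Real.exp (-(Real.log k) ^ 2 / (2 * t)))) t := by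
  intro n t ht
  exact mixture_completely_monotone (a := fun k => Λ k / (k : ℝ) ^ α) (x := fun k => Real.log k)
    (fun k => div_nonneg vonMangoldt_nonneg (by positivity))
    (summable_vonMangoldt_div_rpow hα) n ht
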